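/- Let T be a nontrivial finite rooted planar tree with n vertices whose root has principal subtrees T₁,…,T_k, where T_j has n_j vertices (so n = 1 + Σ_{j=1}^k n_j). Then σ(T) · ∏_{j=1}^k (n_j)! = (n−1)! · ∏_{j=1}^k σ(T_j). -/

import Mathlib

/-- A finite rooted planar tree: a single constructor taking the ordered list
of principal subtrees of the root. -/
inductive PTree : Type where
  | node : List PTree → PTree

namespace PTree

/-- The trivial tree, reduced to its root. -/
def triv : PTree := node []

/-- Whether a tree is trivial. -/
def isTriv : PTree → Bool
  | .node [] => true
  | _ => false

mutual
/-- `d(T)`: the number of leaves of a tree. -/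
def leaves : PTree → ℕ
  | .node [] => 1
  | .node (t :: ts) => leavesL (t :: ts)
def leavesL : List PTree → ℕ
  | [] => 0
  | t :: ts => leaves t + leavesL ts
end

mutual
/-- `d°(T)`: the number of internal vertices of a tree. -/
def ints : PTree → ℕ
  | .node [] => 0
  | .node (t :: ts) => 1 + intsL (t :: ts)
def intsL : List PTree → ℕ
  | [] => 0
  | t :: ts => ints t + intsL ts
end

mutual
/-- The number of vertices of a tree. -/
def verts : PTree → ℕ
  | .node ts => 1 + vertsL ts
def vertsL : List PTree → ℕ
  | [] => 0
  | t :: ts => verts t + vertsL ts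
end

/-- A tree is `k`-regular if every internal vertex has exactly `k` sons. -/
inductive Regular (k : ℕ) : PTree → Prop where
  | leaf : Regular k (.node [])
  | node (ts : List PTree) (hlen : ts.length = k) (h : ∀ t ∈ ts, Regular k t) :
      Regular k (.node ts)

end PTree
namespace PTree

/-- `IsVertex T p` means that the address `p` (a path: at each step, the index
of the son to follow) is a vertex of the tree `T`. -/
def IsVertex : PTree → List ℕ → Prop
  | _, [] => True
  | .node ts, i :: p => ∃ h : i < ts.length, IsVertex ts[i] p

/-- The vertex set of a finite rooted planar tree, partially ordered by
`v ≤ w` iff `v` lies on the path from the root to `w`, i.e. iff the address of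
`v` is a prefix of that of `w`. -/
def Vx (T : PTree) : Type := {p : List ℕ // IsVertex T p}

theorem isVertex_nil (T : PTree) : IsVertex T [] := by cases T; simp [IsVertex]

/-- The root of a tree, as a vertex. -/
def rootVx (T : PTree) : Vx T := ⟨[], isVertex_nil T⟩

/-- A morphism from the poset of vertices of `T` into a poset `P`:
an order-preserving map (the vertex order being the prefix order on addresses). -/
def IsMorph {T : PTree} {P : Type} [Preorder P] (μ : Vx T → P) : Prop :=
  ∀ v w : Vx T, v.val <+: w.val → μ v ≤ μ w

/-- A vertex is a leaf if it has no sons (not even a `0`-th one). -/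
def IsLeafVx {T : PTree} (v : Vx T) : Prop := ¬ IsVertex T (v.val ++ [0])

/-- `w` is a son of `v`. -/
def IsSon {T : PTree} (v w : Vx T) : Prop := ∃ i : ℕ, w.val = v.val ++ [i]

/-- The number of restricted morphisms from the vertex poset of `T` into the
chain `{1 < 2 < … < m}` (realized as `Fin m`): order-preserving maps sending
every leaf of `T` to the top element `m` (i.e. `m - 1` in `Fin m`). -/
noncomputable def restrCount (m : ℕ) (T : PTree) : ℕ :=
  Nat.card {μ : Vx T → Fin m //
    IsMorph μ ∧ ∀ v : Vx T, IsLeafVx v → (μ v : ℕ) = m - 1}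

/-- The number of all morphisms from the vertex poset of `T` into the chain
`{1 < 2 < … < m}` (realized as `Fin m`). -/
noncomputable def morphCount (m : ℕ) (T : PTree) : ℕ :=
  Nat.card {μ : Vx T → Fin m // IsMorph μ}

/-- `σ(T)`: the number of surjective morphisms from the vertex poset of `T`
(with `n` vertices) onto the chain `{1 < 2 < … < n}`. -/
noncomputable def surjCount (T : PTree) : ℕ :=
  Nat.card {μ : Vx T → Fin T.verts // IsMorph μ ∧ Function.Surjective μ}

end PTree

namespace PTree

theorem card_equiv_eq {A B : Type} [Finite A] [Finite B] {n : ℕ} (hA : Nat.card A = n)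
    (hB : Nat.card B = n) : Nat.card (A ≃ B) = n.factorial := by
  classical
  have := Fintype.ofFinite A
  have := Fintype.ofFinite B
  rw [Nat.card_eq_fintype_card] at hA hB ⊢
  rw [Fintype.card_equiv (Fintype.equivOfCardEq (hA.trans hB.symm)), hA]

/-- Standardization of an injective labelling. -/
theorem exists_std {V β : Type} [LinearOrder β] [Finite V] (n : ℕ) (hn : Nat.card V = n)
    (f : V → β) (hf : Function.Injective f) :
    ∃ s : V ≃ Fin n, ∀ v w, s v ≤ s w ↔ f v ≤ f w := by
  classical
  have := Fintype.ofFinite V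
  let _ : LinearOrder V := LinearOrder.lift' f hf
  have h : Fintype.card V = n := by rw [← Nat.card_eq_fintype_card]; exact hn
  let e : Fin n ≃o V := Fintype.orderIsoFinOfCardEq V h
  exact ⟨e.symm.toEquiv, fun v w => e.symm.le_iff_le⟩

theorem std_unique {V : Type} {n : ℕ} (s s' : V ≃ Fin n)
    (h : ∀ v w, s v ≤ s w ↔ s' v ≤ s' w) : s = s' := by
  let e : Fin n ≃o Fin n :=
    { toEquiv := s.symm.trans s'
      map_rel_iff' := by
        intro a b
        simp [← h] }
  have : e = OrderIso.refl _ := Subsingleton.elim _ _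
  ext v
  have h2 : e (s v) = s v := by rw [this]; rfl
  have h3 : e (s v) = s' v := by simp [e]
  rw [← h3, h2]

section Swap

variable {ι : Type} {V : ι → Type} {β : Type} [LinearOrder β] [∀ i, Finite (V i)]
  {n : ι → ℕ}

/-- The standardization of the restriction of `μ` to the `i`-th block. -/
noncomputable def std (hn : ∀ i, Nat.card (V i) = n i) (μ : (Σ i, V i) ≃ β) (i : ι) : V i ≃ Fin (n i) :=
  (exists_std (n i) (hn i) (fun v => μ ⟨i, v⟩)
    (fun v w h => by simpa using h)).choose

theorem std_spec (hn : ∀ i, Nat.card (V i) = n i) (μ : (Σ i, V i) ≃ β) (i : ι) (v w : V i) :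
    std hn μ i v ≤ std hn μ i w ↔ μ ⟨i, v⟩ ≤ μ ⟨i, w⟩ :=
  (exists_std (n i) (hn i) (fun v => μ ⟨i, v⟩)
    (fun v w h => by simpa using h)).choose_spec v w

/-- Exchange the standardizations of `μ` with the given block labellings. -/
noncomputable def swap (hn : ∀ i, Nat.card (V i) = n i) (p : ((Σ i, V i) ≃ β) × (∀ i, V i ≃ Fin (n i))) :
    ((Σ i, V i) ≃ β) × (∀ i, V i ≃ Fin (n i)) :=
  ((Equiv.sigmaCongrRight fun i => (p.2 i).trans (std hn p.1 i).symm).trans p.1, std hn p.1)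

theorem std_swap (hn : ∀ i, Nat.card (V i) = n i) (p : ((Σ i, V i) ≃ β) × (∀ i, V i ≃ Fin (n i))) :
    std hn (swap hn p).1 = p.2 := by
  funext i
  apply std_unique
  intro v w
  rw [std_spec]
  simp [swap, ← std_spec hn]

theorem swap_swap (hn : ∀ i, Nat.card (V i) = n i) : Function.Involutive (swap (β := β) hn) := by
  intro p
  refine Prod.ext ?_ ?_
  · have h := std_swap hn p
    ext ⟨i, v⟩
    change (swap hn p).1 ⟨i, (std hn (swap hn p).1 i).symm (std hn p.1 i v)⟩ = p.1 ⟨i, v⟩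
    rw [h]
    simp [swap]
  · exact std_swap hn p

theorem swap_count (hn : ∀ i, Nat.card (V i) = n i) [Finite ι] [Finite β] (r : ∀ i, V i → V i → Prop) :
    Nat.card {μ : (Σ i, V i) ≃ β // ∀ i v w, r i v w → μ ⟨i, v⟩ ≤ μ ⟨i, w⟩} *
      Nat.card (∀ i, V i ≃ Fin (n i)) =
    Nat.card ((Σ i, V i) ≃ β) *
      Nat.card {ν : ∀ i, V i ≃ Fin (n i) // ∀ i v w, r i v w → ν i v ≤ ν i w} := by
  rw [← Nat.card_prod, ← Nat.card_prod]
  refine Nat.card_congr ((Equiv.trans ?_ ((swap_swap (β := β) hn).toPerm.subtypeEquiv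
    (p := fun p => ∀ i v w, r i v w → p.1 ⟨i, v⟩ ≤ p.1 ⟨i, w⟩)
    (q := fun p => ∀ i v w, r i v w → p.2 i v ≤ p.2 i w) ?_)).trans ?_)
  · exact ⟨fun x => ⟨(x.1.1, x.2), x.1.2⟩, fun x => (⟨x.1.1, x.2⟩, x.1.2),
      fun _ => rfl, fun _ => rfl⟩
  · intro p
    simp [swap, std_spec]
  · exact ⟨fun x => (x.1.1, ⟨x.1.2, x.2⟩), fun x => ⟨(x.1, x.2.1), x.2.2⟩,
      fun _ => rfl, fun _ => rfl⟩

end Swap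

theorem vertsL_eq (ts : List PTree) : vertsL ts = ∑ i : Fin ts.length, verts ts[i] := by
  induction ts with
  | nil => simp [vertsL]
  | cons t ts ih => simp [vertsL, Fin.sum_univ_succ, ih]

/-- Vertices of a tree: the root, or a vertex of a principal subtree. -/
def vxEquiv (ts : List PTree) : Option (Σ i : Fin ts.length, Vx ts[i]) ≃ Vx (.node ts) where
  toFun
    | none => ⟨[], isVertex_nil _⟩
    | some ⟨i, v⟩ => ⟨i.1 :: v.1, by rw [IsVertex]; exact ⟨i.2, v.2⟩⟩
  invFun
    | ⟨[], _⟩ => none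
    | ⟨i :: p, h⟩ => some ⟨⟨i, by rw [IsVertex] at h; exact h.1⟩, ⟨p, by
        rw [IsVertex] at h; exact h.2⟩⟩
  left_inv := by
    rintro (_ | ⟨i, v⟩) <;> rfl
  right_inv := by
    rintro ⟨_ | ⟨i, p⟩, h⟩ <;> rfl

theorem card_vx : ∀ T : PTree, Finite (Vx T) ∧ Nat.card (Vx T) = verts T
  | .node ts => by
    have ih : ∀ i : Fin ts.length, Finite (Vx ts[i]) ∧ Nat.card (Vx ts[i]) = verts ts[i] :=
      fun i => card_vx ts[i]
    have := fun i => (ih i).1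
    refine ⟨Finite.of_equiv _ (vxEquiv ts), ?_⟩
    rw [← Nat.card_congr (vxEquiv ts), Finite.card_option, Nat.card_sigma, verts, vertsL_eq,
      add_comm]
    simp only [fun i => (ih i).2]
termination_by T => T
decreasing_by
  have := List.sizeOf_lt_of_mem (List.getElem_mem i.2)
  simp
  omega

instance (T : PTree) : Finite (Vx T) := (card_vx T).1

theorem surjCount_eq (T : PTree) :
    surjCount T = Nat.card {e : Vx T ≃ Fin T.verts //
      ∀ v w : Vx T, v.val <+: w.val → e v ≤ e w} := by
  refine (Nat.card_congr (Equiv.ofBijective (fun e => ⟨e.1, e.2, e.1.surjective⟩) ⟨?_, ?_⟩)).symm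
  · intro a b h
    apply Subtype.ext
    apply Equiv.coe_fn_injective
    simpa using h
  · rintro ⟨f, hf, hs⟩
    have hb : Function.Bijective f := by
      rw [Nat.bijective_iff_surjective_and_card]
      exact ⟨hs, by simp [(card_vx T).2]⟩
    exact ⟨⟨Equiv.ofBijective f hb, hf⟩, rfl⟩

theorem surjCount_node (ts : List PTree) (x : Fin (verts (.node ts))) (hx : x.val = 0) :
    surjCount (.node ts) = Nat.card {μ : (Σ i : Fin ts.length, Vx ts[i]) ≃ {y // y ≠ x} //
      ∀ i (v w : Vx ts[i]), v.val <+: w.val → μ ⟨i, v⟩ ≤ μ ⟨i, w⟩} := by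
  rw [surjCount_eq]
  let Q : (Option (Σ i : Fin ts.length, Vx ts[i]) ≃ Fin (verts (.node ts))) → Prop := fun e =>
    ∀ i (v w : Vx ts[i]), v.val <+: w.val → e (some ⟨i, v⟩) ≤ e (some ⟨i, w⟩)
  have e1 : {e : Vx (.node ts) ≃ Fin (verts (.node ts)) //
      ∀ v w : Vx (.node ts), v.val <+: w.val → e v ≤ e w} ≃
      {e : Option (Σ i : Fin ts.length, Vx ts[i]) ≃ Fin (verts (.node ts)) //
        e none = x ∧ Q e} := by
    refine ((vxEquiv ts).symm.equivCongr (Equiv.refl _)).subtypeEquiv ?_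
    intro e
    have hval : ∀ a, ((vxEquiv ts).symm.equivCongr (Equiv.refl _)) e a = e (vxEquiv ts a) :=
      fun a => by simp [Equiv.equivCongr]
    simp only [Q, hval]
    constructor
    · intro h
      refine ⟨?_, fun i v w hvw => h _ _ ?_⟩
      · have := h (vxEquiv ts none) (e.symm x) (List.nil_prefix)
        rw [Equiv.apply_symm_apply, Fin.le_def] at this
        apply Fin.ext; omega
      · exact List.cons_prefix_cons.2 ⟨rfl, hvw⟩
    · rintro ⟨h0, h⟩ v w
      obtain ⟨a, rfl⟩ := (vxEquiv ts).surjective v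
      obtain ⟨b, rfl⟩ := (vxEquiv ts).surjective w
      intro hab
      rcases a with _ | ⟨i, v⟩
      · rw [h0, Fin.le_def]; omega
      · rcases b with _ | ⟨j, w⟩
        · simp [vxEquiv] at hab
        · have hab' : (i.1 :: v.1) <+: (j.1 :: w.1) := hab
          rw [List.cons_prefix_cons] at hab'
          obtain ⟨hij, hvw⟩ := hab'
          obtain rfl := Fin.ext hij
          exact h _ _ _ hvw
  refine Nat.card_congr (e1.trans ((Equiv.subtypeSubtypeEquivSubtypeInter _ Q).symm.trans
    ((Equiv.optionSubtype x).subtypeEquiv ?_)))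
  rintro ⟨e, he⟩
  rfl

end PTree

/-- For a nontrivial finite rooted planar tree `T` with `n` vertices and
principal subtrees `T₁, …, T_k` having `n₁, …, n_k` vertices, the number `σ(T)`
of surjective morphisms from `T` onto the chain `{1 < … < n}` satisfies
`σ(T) · ∏_j (n_j)! = (n-1)! · ∏_j σ(T_j)`. -/
theorem statement14 (ts : List PTree) (hne : ts ≠ []) :
    PTree.surjCount (.node ts) * (ts.map fun t => (PTree.verts t).factorial).prod =
      (PTree.verts (.node ts) - 1).factorial * (ts.map PTree.surjCount).prod := by
  classical
  have hx : 0 < PTree.verts (.node ts) := by simp [PTree.verts]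
  have key := PTree.swap_count (β := {y : Fin (PTree.verts (.node ts)) // y ≠ ⟨0, hx⟩})
    (V := fun i : Fin ts.length => PTree.Vx ts[i]) (n := fun i => PTree.verts ts[i])
    (fun i => (PTree.card_vx ts[i]).2) (fun i v w => v.val <+: w.val)
  rw [← PTree.surjCount_node ts ⟨0, hx⟩ rfl] at key
  have h1 : Nat.card (∀ i : Fin ts.length, PTree.Vx ts[i] ≃ Fin (PTree.verts ts[i])) =
      (ts.map fun t => (PTree.verts t).factorial).prod := by
    rw [Nat.card_pi, ← Fin.prod_univ_fun_getElem]
    refine Finset.prod_congr rfl fun i _ => ?_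
    have := Fintype.ofFinite (PTree.Vx ts[i])
    have hc : Fintype.card (PTree.Vx ts[i]) = PTree.verts ts[i] := by
      rw [← Nat.card_eq_fintype_card]; exact (PTree.card_vx ts[i]).2
    rw [Nat.card_eq_fintype_card, Fintype.card_equiv (Fintype.equivFinOfCardEq hc), hc]
    rfl
  have h2 : Nat.card ((Σ i : Fin ts.length, PTree.Vx ts[i]) ≃
      {y : Fin (PTree.verts (.node ts)) // y ≠ ⟨0, hx⟩}) =
      (PTree.verts (.node ts) - 1).factorial := by
    refine PTree.card_equiv_eq ?_ ?_
    · have := (PTree.card_vx (.node ts)).2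
      rw [← Nat.card_congr (PTree.vxEquiv ts), Finite.card_option] at this
      omega
    · simp [Nat.card_eq_fintype_card, Fintype.card_subtype_compl]
  have h3 : Nat.card {ν : ∀ i : Fin ts.length, PTree.Vx ts[i] ≃ Fin (PTree.verts ts[i]) //
      ∀ i (v w : PTree.Vx ts[i]), v.val <+: w.val → ν i v ≤ ν i w} =
      (ts.map PTree.surjCount).prod := by
    rw [Nat.card_congr (Equiv.subtypePiEquivPi
      (p := fun {i} (e : PTree.Vx ts[i] ≃ Fin (PTree.verts ts[i])) =>
        ∀ v w : PTree.Vx ts[i], v.val <+: w.val → e v ≤ e w)), Nat.card_pi,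
      ← Fin.prod_univ_fun_getElem]
    exact Finset.prod_congr rfl fun i _ => (PTree.surjCount_eq ts[i]).symm
  rw [← h1, ← h2, ← h3]
  exact key
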